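/- arXiv:1903.03164 — 8 statements merged into one kernel-verified Lean document; each statement's English description precedes it below -/
import Mathlib

section
/- Let n ≥ 3 and suppose the rates R_1, …, R_n are sustainable with respect to uplink capacities C_u and downlink capacities C_d. Then there exists a nonnegative matrix of sub-stream rates r : {1,…,n} × {1,…,n} → ℝ such that: (i) for every i, ∑_{j=1}^n r_{i,j} = R_i (valid partition); (ii) for every i, the total uplink usage R_i + (n−2)·∑_{k=1}^n r_{k,i} ≤ C_u(i) (uplink capacity); and (iii) for every i, the total downlink usage ∑_{k ≠ i} ∑_{j=1}^n r_{k,j} ≤ C_d(i) (downlink capacity). (This is the rate-matrix formulation of Theorem 1: each sub-stream s_{i,j} is broadcast by a tree of height at most 2 rooted at v_i that first sends to v_j, which relays to the remaining n−2 sites, and s_{i,i} is sent directly from v_i to all others; the stated bandwidth usages encode exactly these height-≤2 trees.) -/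
open Finset

/-- Inner loop of Algorithm 1: processes the column indices `js` in order,
starting from remaining rate `R'` and residual uplink bandwidths `U`.
For each `j`: if `(n-2)·R' > U j` then `r := U j / (n-2)` else `r := R'`;
then `U j` decreases by `(n-2)·r` and `R'` by `r`; exit early once `R' = 0`.
Returns the assigned row of sub-stream rates and the updated residual uplinks. -/
noncomputable def innerLoop (n : ℕ) : ℝ → (Fin n → ℝ) → List (Fin n) → (Fin n → ℝ) × (Fin n → ℝ)
  | _, U, [] => (fun _ => 0, U)
  | R', U, j :: js =>
      let rij : ℝ := if (n - 2 : ℝ) * R' > U j then U j / (n - 2 : ℝ) else R'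
      let U' : Fin n → ℝ := Function.update U j (U j - (n - 2 : ℝ) * rij)
      if R' - rij = 0 then
        (Function.update (fun _ => (0 : ℝ)) j rij, U')
      else
        let rest := innerLoop n (R' - rij) U' js
        (Function.update rest.1 j rij, rest.2)

/-- Outer loop of Algorithm 1 over the list `is` of row indices, carrying the
rate matrix `r` computed so far and the residual uplinks `U`. -/
noncomputable def outerLoop (n : ℕ) (R : Fin n → ℝ) :
    (Fin n → Fin n → ℝ) → (Fin n → ℝ) → List (Fin n) → (Fin n → Fin n → ℝ) × (Fin n → ℝ)
  | r, U, [] => (r, U)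
  | r, U, i :: is =>
      let res := innerLoop n (R i) U (List.finRange n)
      outerLoop n R (Function.update r i res.1) res.2 is

/-- The matrix of sub-stream rates output by Algorithm 1, with initial
residual uplinks `U j := Cu j - R j` and rows/columns processed in order. -/
noncomputable def algOutput (n : ℕ) (Cu R : Fin n → ℝ) : Fin n → Fin n → ℝ :=
  (outerLoop n R (fun _ _ => 0) (fun j => Cu j - R j) (List.finRange n)).1

/-- `Ustart n Cu R k i` is the residual uplink bandwidth `U_i` after the first `k`
outer-loop iterations of Algorithm 1, i.e. the value `U_i[k+1]` at the start of
(1-indexed) outer-loop iteration `k+1`. -/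
noncomputable def Ustart (n : ℕ) (Cu R : Fin n → ℝ) (k : ℕ) : Fin n → ℝ :=
  (outerLoop n R (fun _ _ => 0) (fun j => Cu j - R j) ((List.finRange n).take k)).2

/-- The rates `R` are sustainable w.r.t. uplink capacities `Cu` and downlink
capacities `Cd`: (1) `R i ≤ Cu i`; (2) `∑_{j ≠ i} R j ≤ Cd i`;
(3) `(n-1)·∑ R ≤ ∑ Cu`. -/
def Sustainable (n : ℕ) (Cu Cd R : Fin n → ℝ) : Prop :=
  (∀ i, R i ≤ Cu i) ∧
  (∀ i : Fin n, ∑ j ∈ Finset.univ.erase i, R j ≤ Cd i) ∧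
  ((n : ℝ) - 1) * (∑ i, R i) ≤ ∑ i, Cu i

/-- **Theorem 1, rate-matrix form.** If `n ≥ 3` and the rates `R`
are sustainable, there exists a nonnegative matrix `r` of sub-stream rates with:
(i) each row sums to `R i`; (ii) `R i + (n-2)·∑_k r k i ≤ Cu i` (uplink usage of
the height-≤2 trees); (iii) `∑_{k ≠ i} ∑_j r k j ≤ Cd i` (downlink usage). -/
theorem theorem_one (n : ℕ) (hn : 3 ≤ n) (Cu Cd R : Fin n → ℝ)
    (hCu : ∀ i, 0 < Cu i) (hCd : ∀ i, 0 < Cd i) (hR : ∀ i, 0 < R i)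
    (hsus : Sustainable n Cu Cd R) :
    ∃ r : Fin n → Fin n → ℝ,
      (∀ i j, 0 ≤ r i j) ∧
      (∀ i, ∑ j, r i j = R i) ∧
      (∀ i, R i + ((n : ℝ) - 2) * (∑ k, r k i) ≤ Cu i) ∧
      (∀ i : Fin n, ∑ k ∈ Finset.univ.erase i, ∑ j, r k j ≤ Cd i) := by
  obtain ⟨h1, h2, h3⟩ := hsus
  have hn' : (3 : ℝ) ≤ n := by exact_mod_cast hn
  haveI : Nonempty (Fin n) := ⟨⟨0, by omega⟩⟩
  have hT : 0 < ∑ i, R i := Finset.sum_pos (fun i _ => hR i) Finset.univ_nonempty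
  obtain ⟨T, hTd⟩ : ∃ T, T = ∑ i, R i := ⟨_, rfl⟩
  obtain ⟨S, hSd⟩ : ∃ S, S = ∑ i, (Cu i - R i) := ⟨_, rfl⟩
  have hS : ((n : ℝ) - 2) * T ≤ S := by
    rw [hSd, Finset.sum_sub_distrib, ← hTd]
    rw [← hTd] at h3
    linarith
  rw [← hTd] at hT
  have hSpos : 0 < S := lt_of_lt_of_le (mul_pos (by linarith) hT) hS
  have hrow : ∀ i, ∑ j, R i * (Cu j - R j) / S = R i := by
    intro i
    rw [← Finset.sum_div, ← Finset.mul_sum, ← hSd]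
    field_simp
  refine ⟨fun i j => R i * (Cu j - R j) / S, ?_, hrow, ?_, ?_⟩
  · intro i j
    exact div_nonneg (mul_nonneg (hR i).le (sub_nonneg.2 (h1 j))) hSpos.le
  · intro i
    have hU := sub_nonneg.2 (h1 i)
    simp only
    rw [← Finset.sum_div, ← Finset.sum_mul, ← hTd]
    have : ((n : ℝ) - 2) * (T * (Cu i - R i) / S) ≤ Cu i - R i := by
      rw [← mul_div_assoc, div_le_iff₀ hSpos, ← mul_assoc, mul_comm (Cu i - R i)]
      exact mul_le_mul_of_nonneg_right hS hU
    linarith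
  · intro i
    simp only [hrow]
    exact h2 i
end

section
/- For every outer-loop iteration index α with 1 ≤ α ≤ n of Algorithm 1: if ∑_{i=1}^n U_i[α] ≥ (n−2)·R_α, then at the end of iteration α of the outer loop, ∑_{i=1}^n r_{α,i} = R_α. -/
open Finset

theorem innerLoop_supp (n : ℕ) (js : List (Fin n)) : ∀ (R' : ℝ) (U : Fin n → ℝ) (i : Fin n),
    i ∉ js → (innerLoop n R' U js).1 i = 0 := by
  induction js with
  | nil => intro R' U i _; simp [innerLoop]
  | cons j js ih =>
    intro R' U i hi
    simp only [List.mem_cons, not_or] at hi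
    simp only [innerLoop]
    split_ifs <;> simp [Function.update_of_ne hi.1, ih _ _ _ hi.2]

theorem sum_update_zero (n : ℕ) (f : Fin n → ℝ) (j : Fin n) (x : ℝ) (h : f j = 0) :
    ∑ i, Function.update f j x i = x + ∑ i, f i := by
  rw [Finset.sum_update_of_mem (Finset.mem_univ j),
    ← Finset.add_sum_erase Finset.univ f (Finset.mem_univ j), h, zero_add,
    Finset.sdiff_singleton_eq_erase]

theorem innerLoop_sum (n : ℕ) (hn : 3 ≤ n) (js : List (Fin n)) :
    ∀ (R' : ℝ) (U : Fin n → ℝ), js.Nodup → 0 < R' →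
    ((n : ℝ) - 2) * R' ≤ (js.map U).sum → ∑ i, (innerLoop n R' U js).1 i = R' := by
  have hn' : (0 : ℝ) < (n : ℝ) - 2 := by
    have : (3 : ℝ) ≤ n := by exact_mod_cast hn
    linarith
  induction js with
  | nil =>
    intro R' U _ hR h
    have := mul_pos hn' hR
    simp at h
    linarith
  | cons j js ih =>
    intro R' U hnd hR h
    rw [List.nodup_cons] at hnd
    rw [List.map_cons, List.sum_cons] at h
    by_cases hc : ((n : ℝ) - 2) * R' > U j
    · have hpos : 0 < R' - U j / ((n : ℝ) - 2) := by
        rw [sub_pos, div_lt_iff₀ hn']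
        linarith
      simp only [innerLoop, if_pos hc, if_neg hpos.ne']
      rw [sum_update_zero _ _ _ _ (innerLoop_supp _ _ _ _ _ hnd.1), ih _ _ hnd.2 hpos]
      · ring
      · have hm : js.map (Function.update U j
            (U j - ((n : ℝ) - 2) * (U j / ((n : ℝ) - 2)))) = js.map U := by
          apply List.map_congr_left
          intro a ha
          have hne : a ≠ j := by
            rintro rfl
            exact hnd.1 ha
          exact Function.update_of_ne hne _ _
        rw [hm, mul_sub, mul_div_cancel₀ _ hn'.ne']
        linarith
    · simp only [innerLoop, if_neg hc, sub_self, if_true]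
      rw [sum_update_zero _ _ _ _ rfl]
      simp

theorem outerLoop_append (n : ℕ) (R : Fin n → ℝ) (l₁ l₂ : List (Fin n)) :
    ∀ (r : Fin n → Fin n → ℝ) (U : Fin n → ℝ), outerLoop n R r U (l₁ ++ l₂) =
      outerLoop n R (outerLoop n R r U l₁).1 (outerLoop n R r U l₁).2 l₂ := by
  induction l₁ with
  | nil => intro r U; simp [outerLoop]
  | cons i l ih => intro r U; simp only [List.cons_append, outerLoop, ih]

theorem outerLoop_row (n : ℕ) (R : Fin n → ℝ) (l : List (Fin n)) (i : Fin n) :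
    ∀ (r : Fin n → Fin n → ℝ) (U : Fin n → ℝ), i ∉ l → (outerLoop n R r U l).1 i = r i := by
  induction l with
  | nil => intro r U _; simp [outerLoop]
  | cons j l ih =>
    intro r U hi
    simp only [List.mem_cons, not_or] at hi
    simp only [outerLoop]
    rw [ih _ _ hi.2, Function.update_of_ne hi.1]

/-- **Proposition 1.** For every outer-loop iteration `α`
(1-indexed, `1 ≤ α ≤ n`): if `∑_i U_i[α] ≥ (n-2)·R_α`, then at the end of
iteration `α` the row `α` of the rate matrix sums to `R_α` (row `α` is never
modified after iteration `α`, so we may read it off the final output). -/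
theorem proposition_one (n : ℕ) (hn : 3 ≤ n) (Cu R : Fin n → ℝ)
    (hCu : ∀ i, 0 < Cu i) (hR : ∀ i, 0 < R i)
    (α : ℕ) (hα1 : 1 ≤ α) (hαn : α ≤ n)
    (h : ((n : ℝ) - 2) * R ⟨α - 1, by omega⟩ ≤ ∑ i, Ustart n Cu R (α - 1) i) :
    ∑ i, algOutput n Cu R ⟨α - 1, by omega⟩ i = R ⟨α - 1, by omega⟩ := by
  have hlen : α - 1 < (List.finRange n).length := by simp; omega
  have hd : (List.finRange n).drop (α - 1) =
      (⟨α - 1, by omega⟩ : Fin n) :: (List.finRange n).drop (α - 1 + 1) := by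
    rw [List.drop_eq_getElem_cons hlen]; simp
  have hnd : ((List.finRange n).drop (α - 1)).Nodup :=
    (List.nodup_finRange n).sublist (List.drop_sublist _ _)
  rw [hd, List.nodup_cons] at hnd
  have key : algOutput n Cu R ⟨α - 1, by omega⟩ =
      (innerLoop n (R ⟨α - 1, by omega⟩) (Ustart n Cu R (α - 1)) (List.finRange n)).1 := by
    unfold algOutput Ustart
    conv_lhs => rw [← List.take_append_drop (α - 1) (List.finRange n), outerLoop_append, hd]
    simp only [outerLoop]
    rw [outerLoop_row _ _ _ _ _ _ hnd.1, Function.update_self]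
  rw [key]
  apply innerLoop_sum n hn _ _ _ (List.nodup_finRange n) (hR _)
  rw [← List.ofFn_eq_map, List.sum_ofFn]
  exact h
end

section
/- Suppose the rates R_1, …, R_n are sustainable. Then for every α with 1 ≤ α ≤ n, the residual uplink bandwidths of Algorithm 1 satisfy ∑_{i=1}^n U_i[α] ≥ (n−2)·∑_{i=α}^n R_i. -/
open Finset

theorem inner_bound (n : ℕ) (hn : 3 ≤ n) (js : List (Fin n)) : ∀ (R' : ℝ) (U : Fin n → ℝ),
    0 ≤ R' → ∑ i, U i - ((n : ℝ) - 2) * R' ≤ ∑ i, (innerLoop n R' U js).2 i := by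
  have hn' : (0 : ℝ) < (n : ℝ) - 2 := by
    have : (3 : ℝ) ≤ n := by exact_mod_cast hn
    linarith
  induction js with
  | nil =>
    intro R' U h
    simp only [innerLoop]
    nlinarith
  | cons j js ih =>
    intro R' U h
    simp only [innerLoop]
    set rij : ℝ := if (n - 2 : ℝ) * R' > U j then U j / (n - 2 : ℝ) else R' with hr
    have hle : rij ≤ R' := by
      rw [hr]
      split_ifs with hc
      · rw [div_le_iff₀ hn']
        linarith
      · exact le_refl _
    have hs : ∑ i, Function.update U j (U j - (n - 2 : ℝ) * rij) i
        = ∑ i, U i - ((n : ℝ) - 2) * rij := by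
      rw [Finset.sum_update_of_mem (Finset.mem_univ j),
        ← Finset.add_sum_erase Finset.univ U (Finset.mem_univ j), Finset.sdiff_singleton_eq_erase]
      ring
    split_ifs with h0
    · simp only [hs]
      have : rij = R' := by linarith
      rw [this]
    · have := ih (R' - rij) (Function.update U j (U j - (n - 2 : ℝ) * rij)) (by linarith)
      rw [hs] at this
      refine le_trans (le_of_eq ?_) this
      ring

theorem outer_bound (n : ℕ) (hn : 3 ≤ n) (R : Fin n → ℝ) (hR : ∀ i, 0 < R i)
    (is : List (Fin n)) : ∀ (r : Fin n → Fin n → ℝ) (U : Fin n → ℝ),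
    ∑ i, U i - ((n : ℝ) - 2) * (is.map R).sum ≤ ∑ i, (outerLoop n R r U is).2 i := by
  induction is with
  | nil => intro r U; simp [outerLoop]
  | cons i is ih =>
    intro r U
    simp only [outerLoop, List.map_cons, List.sum_cons]
    have h1 := inner_bound n hn (List.finRange n) (R i) U (hR i).le
    have h2 := ih (Function.update r i (innerLoop n (R i) U (List.finRange n)).1)
      (innerLoop n (R i) U (List.finRange n)).2
    linarith

theorem take_sum (n : ℕ) (R : Fin n → ℝ) (k : ℕ) :
    (((List.finRange n).take k).map R).sum
      = ∑ i ∈ Finset.univ.filter (fun i : Fin n => ¬ (k ≤ (i : ℕ))), R i := by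
  rw [← List.sum_toFinset R ((List.nodup_finRange n).sublist (List.take_sublist _ _))]
  congr 1
  ext i
  simp only [List.mem_toFinset, List.mem_take_iff_getElem, Finset.mem_filter, Finset.mem_univ,
    true_and, List.getElem_finRange, List.length_finRange, not_le]
  constructor
  · rintro ⟨m, hm, rfl⟩
    simp at hm ⊢
    omega
  · intro h
    exact ⟨i, by simp [h], by simp⟩

/-- **Proposition 2.** If the rates are sustainable then for every
`α` with `1 ≤ α ≤ n`, `∑_i U_i[α] ≥ (n-2)·∑_{i=α}^{n} R_i` (here site `i : Fin n`
has 1-indexed position `i+1`). -/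
theorem proposition_two (n : ℕ) (hn : 3 ≤ n) (Cu Cd R : Fin n → ℝ)
    (hCu : ∀ i, 0 < Cu i) (hCd : ∀ i, 0 < Cd i) (hR : ∀ i, 0 < R i)
    (hsus : Sustainable n Cu Cd R)
    (α : ℕ) (hα1 : 1 ≤ α) (hαn : α ≤ n) :
    ((n : ℝ) - 2) * (∑ i ∈ Finset.univ.filter (fun i : Fin n => α ≤ (i : ℕ) + 1), R i)
      ≤ ∑ i, Ustart n Cu R (α - 1) i := by
  have h := outer_bound n hn R hR ((List.finRange n).take (α - 1)) (fun _ _ => 0)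
    (fun j => Cu j - R j)
  rw [take_sum, Finset.sum_sub_distrib] at h
  have h3 := hsus.2.2
  have h4 := Finset.sum_filter_add_sum_filter_not Finset.univ
    (fun i : Fin n => α - 1 ≤ (i : ℕ)) R
  have h5 : Finset.univ.filter (fun i : Fin n => α ≤ (i : ℕ) + 1)
      = Finset.univ.filter (fun i : Fin n => α - 1 ≤ (i : ℕ)) := by
    ext i
    simp
  rw [h5]
  unfold Ustart
  refine le_trans ?_ h
  rw [← h4] at h3 ⊢
  linarith
end

section
/- Suppose the rates R_1, …, R_n are sustainable. Then the output r of Algorithm 1 satisfies the Valid Partition Constraint: for every i with 1 ≤ i ≤ n, ∑_{j=1}^n r_{i,j} = R_i. -/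
open Finset

theorem innerLoop_spec (n : ℕ) (hc : (0:ℝ) < (n - 2 : ℝ)) (js : List (Fin n)) :
    ∀ (R' : ℝ) (U : Fin n → ℝ), js.Nodup → (∀ j, 0 ≤ U j) → 0 ≤ R' →
      (n - 2 : ℝ) * R' ≤ (js.map U).sum →
      (∀ j, 0 ≤ (innerLoop n R' U js).2 j) ∧
      (∀ j, (innerLoop n R' U js).2 j = U j - (n - 2 : ℝ) * (innerLoop n R' U js).1 j) ∧
      (∀ j, j ∉ js → (innerLoop n R' U js).1 j = 0) ∧
      ∑ j, (innerLoop n R' U js).1 j = R' := by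
  induction js with
  | nil =>
    intro R' U _ hU hR h
    simp only [List.map_nil, List.sum_nil] at h
    have : R' = 0 := by nlinarith
    simp [innerLoop, hU, this]
  | cons j js ih =>
    intro R' U hnd hU hR h
    obtain ⟨hj, hnd⟩ := List.nodup_cons.mp hnd
    simp only [List.map_cons, List.sum_cons] at h
    by_cases hlt : (n - 2 : ℝ) * R' > U j
    · have hm : (n - 2 : ℝ) * (U j / (n - 2 : ℝ)) = U j := by field_simp
      have hne : R' - U j / (n - 2 : ℝ) > 0 := by
        by_contra hcon
        nlinarith
      have hmap : js.map (Function.update U j (U j - (n - 2 : ℝ) * (U j / (n - 2 : ℝ)))) = js.map U := by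
        apply List.map_congr_left
        intro a ha
        rw [Function.update_of_ne]
        rintro rfl
        exact hj ha
      obtain ⟨h1, h2, h3, h4⟩ := ih (R' - U j / (n - 2 : ℝ))
        (Function.update U j (U j - (n - 2 : ℝ) * (U j / (n - 2 : ℝ)))) hnd
        (by
          intro a
          by_cases ha : a = j
          · subst ha; simp [hm]
          · simp [ha, hU])
        hne.le (by rw [hmap, mul_sub, hm]; linarith)
      simp only [innerLoop, if_pos hlt, if_neg hne.ne']
      refine ⟨h1, ?_, ?_, ?_⟩
      · intro a
        by_cases ha : a = j
        · subst ha
          rw [h2, h3 _ hj]; simp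
        · rw [h2]; simp [ha]
      · intro a ha
        simp only [List.mem_cons, not_or] at ha
        rw [Function.update_of_ne ha.1, h3 _ ha.2]
      · rw [← Finset.add_sum_erase _ _ (Finset.mem_univ j)] at h4
        rw [h3 _ hj] at h4
        rw [Finset.sum_update_of_mem (Finset.mem_univ j), ← Finset.erase_eq]
        linarith
    · simp only [innerLoop, if_neg hlt, sub_self, if_true]
      refine ⟨?_, ?_, ?_, ?_⟩
      · intro a
        by_cases ha : a = j
        · subst ha; simp; linarith
        · simp [ha, hU]
      · intro a
        by_cases ha : a = j
        · subst ha; simp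
        · simp [ha]
      · intro a ha
        simp only [List.mem_cons, not_or] at ha
        simp [ha.1]
      · rw [Finset.sum_update_of_mem (Finset.mem_univ j)]; simp

theorem outerLoop_spec (n : ℕ) (hc : (0:ℝ) < (n - 2 : ℝ)) (R : Fin n → ℝ) (hR : ∀ i, 0 < R i)
    (is : List (Fin n)) :
    ∀ (r : Fin n → Fin n → ℝ) (U : Fin n → ℝ), is.Nodup → (∀ j, 0 ≤ U j) →
      (n - 2 : ℝ) * (is.map R).sum ≤ ∑ j, U j →
      (∀ i, i ∉ is → (outerLoop n R r U is).1 i = r i) ∧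
      (∀ i ∈ is, ∑ j, (outerLoop n R r U is).1 i j = R i) := by
  induction is with
  | nil => intro r U _ _ _; simp [outerLoop]
  | cons i is ih =>
    intro r U hnd hU h
    obtain ⟨hi, hnd⟩ := List.nodup_cons.mp hnd
    simp only [List.map_cons, List.sum_cons] at h
    have hs : 0 ≤ (is.map R).sum := by
      apply List.sum_nonneg
      intro x hx
      obtain ⟨a, _, rfl⟩ := List.mem_map.mp hx
      exact (hR a).le
    have hfin : ((List.finRange n).map U).sum = ∑ j, U j := by
      rw [← List.ofFn_eq_map, List.sum_ofFn]
    obtain ⟨h1, h2, _, h4⟩ := innerLoop_spec n hc (List.finRange n) (R i) U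
      (List.nodup_finRange n) hU (hR i).le (by rw [hfin]; nlinarith)
    obtain ⟨k1, k2⟩ := ih (Function.update r i (innerLoop n (R i) U (List.finRange n)).1)
      (innerLoop n (R i) U (List.finRange n)).2 hnd h1 (by
        rw [Finset.sum_congr rfl (fun j _ => h2 j), Finset.sum_sub_distrib, ← Finset.mul_sum, h4]
        linarith)
    simp only [outerLoop]
    refine ⟨?_, ?_⟩
    · intro a ha
      simp only [List.mem_cons, not_or] at ha
      rw [k1 a ha.2, Function.update_of_ne ha.1]
    · intro a ha
      by_cases hai : a = i
      · subst hai
        rw [k1 a hi]; simpa using h4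
      · exact k2 a ((List.mem_cons.mp ha).resolve_left hai)

/-- **Proposition 3.** If the rates are sustainable then the output
of Algorithm 1 satisfies the Valid Partition Constraint: every row `i` of the
rate matrix sums to `R i`. -/
theorem valid_partition (n : ℕ) (hn : 3 ≤ n) (Cu Cd R : Fin n → ℝ)
    (hCu : ∀ i, 0 < Cu i) (hCd : ∀ i, 0 < Cd i) (hR : ∀ i, 0 < R i)
    (hsus : Sustainable n Cu Cd R) :
    ∀ i : Fin n, ∑ j, algOutput n Cu R i j = R i := by
  intro i
  have hc : (0:ℝ) < (n - 2 : ℝ) := by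
    have : (3:ℝ) ≤ n := by exact_mod_cast hn
    linarith
  obtain ⟨s1, _, s3⟩ := hsus
  refine (outerLoop_spec n hc R hR (List.finRange n) (fun _ _ => 0) (fun j => Cu j - R j)
    (List.nodup_finRange n) (fun j => sub_nonneg.mpr (s1 j)) ?_).2 i (List.mem_finRange i)
  rw [← List.ofFn_eq_map, List.sum_ofFn, Finset.sum_sub_distrib]
  linarith
end

section
/- Suppose R_i ≤ C_u(i) for all i with 1 ≤ i ≤ n. Then throughout the execution of Algorithm 1 the residual uplink bandwidths remain nonnegative: U_i[α] ≥ 0 for all i and α with 1 ≤ i, α ≤ n. -/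
open Finset

theorem inner_nonneg_aux (n : ℕ) (hn : 3 ≤ n) (js : List (Fin n)) :
    ∀ (R' : ℝ) (U : Fin n → ℝ), (∀ i, 0 ≤ U i) → ∀ i, 0 ≤ (innerLoop n R' U js).2 i := by
  have h2 : (0 : ℝ) < (n : ℝ) - 2 := by
    have : (3 : ℝ) ≤ n := by exact_mod_cast hn
    linarith
  induction js with
  | nil => intro R' U hU i; simpa [innerLoop] using hU i
  | cons j js ih =>
    intro R' U hU
    have key : ∀ i, 0 ≤ Function.update U j (U j - ((n : ℝ) - 2) *
        (if ((n : ℝ) - 2) * R' > U j then U j / ((n : ℝ) - 2) else R')) i := by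
      intro i
      by_cases hij : i = j
      · subst hij
        rw [Function.update_self]
        split_ifs with h
        · rw [mul_div_cancel₀ _ h2.ne']; simp
        · linarith
      · rw [Function.update_of_ne hij]; exact hU i
    intro i
    simp only [innerLoop]
    generalize (if ((n : ℝ) - 2) * R' > U j then U j / ((n : ℝ) - 2) else R') = x at key ⊢
    split_ifs
    · exact key i
    · exact ih _ _ key i

theorem outer_nonneg_aux (n : ℕ) (hn : 3 ≤ n) (R : Fin n → ℝ) (l : List (Fin n)) :
    ∀ (r : Fin n → Fin n → ℝ) (U : Fin n → ℝ), (∀ i, 0 ≤ U i) →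
      ∀ i, 0 ≤ (outerLoop n R r U l).2 i := by
  induction l with
  | nil => intro r U hU i; simpa [outerLoop] using hU i
  | cons a l ih =>
    intro r U hU i
    simp only [outerLoop]
    exact ih _ _ (inner_nonneg_aux n hn _ _ _ hU) i

/-- **Lemma 2.** If `R i ≤ Cu i` for all `i`, then the residual
uplink bandwidths stay nonnegative throughout Algorithm 1:
`U_i[α] ≥ 0` for all `1 ≤ i, α ≤ n`. -/
theorem residual_nonneg (n : ℕ) (hn : 3 ≤ n) (Cu R : Fin n → ℝ)
    (hCu : ∀ i, 0 < Cu i) (hR : ∀ i, 0 < R i)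
    (hRCu : ∀ i, R i ≤ Cu i) :
    ∀ (i : Fin n) (α : ℕ), 1 ≤ α → α ≤ n → 0 ≤ Ustart n Cu R (α - 1) i := by
  intro i α _ _
  exact outer_nonneg_aux n hn R _ _ _ (fun j => sub_nonneg.mpr (hRCu j)) i
end

section
/- Suppose the rates R_1, …, R_n are sustainable. Then the output r of Algorithm 1 satisfies the Uplink Capacity Constraint: for every i with 1 ≤ i ≤ n, the total uplink usage at site i satisfies R_i + (n−2)·∑_{k=1}^n r_{k,i} ≤ C_u(i). -/
open Finset

theorem innerLoop_inv (n : ℕ) (hn : (0:ℝ) < (n:ℝ) - 2) (js : List (Fin n)) :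
    ∀ (R' : ℝ) (U : Fin n → ℝ), js.Nodup → (∀ l, 0 ≤ U l) →
      (∀ l, 0 ≤ (innerLoop n R' U js).2 l) ∧
      (∀ l, (innerLoop n R' U js).2 l + ((n:ℝ) - 2) * (innerLoop n R' U js).1 l = U l) ∧
      (∀ l, l ∉ js → (innerLoop n R' U js).1 l = 0) := by
  induction js with
  | nil => intro R' U _ hU; simp [innerLoop, hU]
  | cons j js ih =>
    intro R' U hnd hU
    rw [List.nodup_cons] at hnd
    obtain ⟨hj, hnd⟩ := hnd
    simp only [innerLoop]
    set rij : ℝ := if (n - 2 : ℝ) * R' > U j then U j / (n - 2 : ℝ) else R' with hr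
    have h0 : 0 ≤ U j - ((n:ℝ) - 2) * rij := by
      rw [hr]
      split_ifs with h
      · rw [mul_div_cancel₀ _ hn.ne']; simp
      · linarith
    clear_value rij
    have hU' : ∀ l, 0 ≤ Function.update U j (U j - ((n:ℝ) - 2) * rij) l := by
      intro l
      by_cases hl : l = j
      · subst hl; simpa using h0
      · simpa [Function.update_of_ne hl] using hU l
    obtain ⟨h1, h2, h3⟩ := ih (R' - rij) _ hnd hU'
    split_ifs with h
    · refine ⟨hU', fun l => ?_, fun l hl => ?_⟩
      · by_cases hl : l = j
        · subst hl; simp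
        · simp [Function.update_of_ne hl]
      · have : l ≠ j := fun h => hl (by simp [h])
        simp [Function.update_of_ne this]
    · refine ⟨h1, fun l => ?_, fun l hl => ?_⟩
      · have h2l := h2 l
        by_cases hl : l = j
        · subst hl
          rw [h3 l hj] at h2l
          simp only [Function.update_self] at h2l ⊢
          linarith
        · simpa [Function.update_of_ne hl] using h2l
      · have hne : l ≠ j := fun h => hl (by simp [h])
        simp only [Function.update_of_ne hne]
        exact h3 l (fun h => hl (by simp [h]))

theorem outerLoop_inv (n : ℕ) (hn : (0:ℝ) < (n:ℝ) - 2) (R : Fin n → ℝ) (js : List (Fin n)) :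
    ∀ (r : Fin n → Fin n → ℝ) (U : Fin n → ℝ), js.Nodup → (∀ l, 0 ≤ U l) →
      (∀ k ∈ js, ∀ l, r k l = 0) →
      ∀ l, ((n:ℝ) - 2) * (∑ k, (outerLoop n R r U js).1 k l)
        ≤ U l + ((n:ℝ) - 2) * ∑ k, r k l := by
  induction js with
  | nil => intro r U _ hU _ l; simp [outerLoop, hU]
  | cons i js ih =>
    intro r U hnd hU hr l
    rw [List.nodup_cons] at hnd
    obtain ⟨hi, hnd⟩ := hnd
    simp only [outerLoop]
    obtain ⟨h1, h2, -⟩ := innerLoop_inv n hn (List.finRange n) (R i) U (List.nodup_finRange n) hU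
    set res := innerLoop n (R i) U (List.finRange n)
    have := ih (Function.update r i res.1) res.2 hnd h1 (fun k hk l => by
      have hne : k ≠ i := fun h => hi (h ▸ hk)
      rw [Function.update_of_ne hne]
      exact hr k (by simp [hk]) l) l
    have hs : ∑ k, Function.update r i res.1 k l = res.1 l + ∑ k, r k l := by
      rw [← Finset.add_sum_erase _ _ (Finset.mem_univ i),
        ← Finset.add_sum_erase _ (fun k => r k l) (Finset.mem_univ i)]
      simp only [Function.update_self, hr i (by simp) l, zero_add]
      congr 1
      refine Finset.sum_congr rfl fun k hk => ?_
      rw [Function.update_of_ne (Finset.ne_of_mem_erase hk)]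
    rw [hs] at this
    have := h2 l
    linarith

/-- If the rates are sustainable then the output of Algorithm 1
satisfies the Uplink Capacity Constraint: at every site `i` the total uplink
usage `R i + (n-2)·∑_k r k i` is at most `Cu i`. -/
theorem uplink_capacity (n : ℕ) (hn : 3 ≤ n) (Cu Cd R : Fin n → ℝ)
    (hCu : ∀ i, 0 < Cu i) (hCd : ∀ i, 0 < Cd i) (hR : ∀ i, 0 < R i)
    (hsus : Sustainable n Cu Cd R) :
    ∀ i : Fin n, R i + ((n : ℝ) - 2) * (∑ k, algOutput n Cu R k i) ≤ Cu i := by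
  intro i
  have h2 : (0:ℝ) < (n:ℝ) - 2 := by
    have : (3:ℝ) ≤ n := by exact_mod_cast hn
    linarith
  have := outerLoop_inv n h2 R (List.finRange n) (fun _ _ => 0) (fun j => Cu j - R j)
    (List.nodup_finRange n) (fun l => sub_nonneg.2 (hsus.1 l)) (fun _ _ _ => rfl) i
  simp only [Finset.sum_const_zero, mul_zero, add_zero] at this
  unfold algOutput
  linarith
end

section
/- Suppose the rates R_1, …, R_n are sustainable. Then the output r of Algorithm 1 satisfies the Downlink Capacity Constraint: for every i with 1 ≤ i ≤ n, the total downlink usage at site i satisfies ∑_{k ≠ i} ∑_{j=1}^n r_{k,j} ≤ C_d(i). -/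
open Finset

theorem inner_aux (n : ℕ) (hn : 3 ≤ n) (js : List (Fin n)) :
    ∀ (R' : ℝ) (U : Fin n → ℝ), js.Nodup → 0 ≤ R' →
      (∀ j, j ∉ js → (innerLoop n R' U js).1 j = 0) ∧ ∑ j, (innerLoop n R' U js).1 j ≤ R' := by
  have hn' : (0 : ℝ) < n - 2 := by
    have : (3 : ℝ) ≤ n := by exact_mod_cast hn
    linarith
  induction js with
  | nil => intro R' U _ h; simp [innerLoop, h]
  | cons a js ih =>
    intro R' U hnd h
    rw [List.nodup_cons] at hnd
    simp only [innerLoop]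
    generalize hr : (if (n - 2 : ℝ) * R' > U a then U a / (n - 2 : ℝ) else R') = rij
    have hle : rij ≤ R' := by
      rw [← hr]
      split_ifs with hc
      · rw [div_le_iff₀ hn']; linarith
      · exact le_rfl
    have hsum : ∀ f : Fin n → ℝ, f a = 0 →
        ∑ j, Function.update f a rij j = rij + ∑ j, f j := by
      intro f hf
      rw [Finset.sum_update_of_mem (Finset.mem_univ a),
        ← Finset.add_sum_erase Finset.univ f (Finset.mem_univ a), hf, zero_add,
        Finset.sdiff_singleton_eq_erase]
    split_ifs with h0
    · refine ⟨?_, ?_⟩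
      · intro j hj
        simp only [List.mem_cons, not_or] at hj
        simp [Function.update_of_ne hj.1]
      · rw [hsum _ rfl]; simpa using hle
    · obtain ⟨h1, h2⟩ := ih (R' - rij) (Function.update U a (U a - (n - 2 : ℝ) * rij)) hnd.2
        (by linarith)
      refine ⟨?_, ?_⟩
      · intro j hj
        simp only [List.mem_cons, not_or] at hj
        simp only [Function.update_of_ne hj.1]
        exact h1 j hj.2
      · rw [hsum _ (h1 a hnd.1)]; linarith

theorem outer_aux (n : ℕ) (hn : 3 ≤ n) (R : Fin n → ℝ) (hR : ∀ i, 0 < R i)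
    (is : List (Fin n)) :
    ∀ (r : Fin n → Fin n → ℝ) (U : Fin n → ℝ), (∀ k, ∑ j, r k j ≤ R k) →
      ∀ k, ∑ j, (outerLoop n R r U is).1 k j ≤ R k := by
  induction is with
  | nil => intro r U h; simpa [outerLoop] using h
  | cons a is ih =>
    intro r U h
    simp only [outerLoop]
    apply ih
    intro k
    by_cases hk : k = a
    · subst hk
      simp only [Function.update_self]
      exact (inner_aux n hn _ (R k) U (List.nodup_finRange n) (hR k).le).2
    · simp only [Function.update_of_ne hk]
      exact h k

/-- If the rates are sustainable then the output of Algorithm 1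
satisfies the Downlink Capacity Constraint: at every site `i` the total downlink
usage `∑_{k ≠ i} ∑_j r k j` is at most `Cd i`. -/
theorem downlink_capacity (n : ℕ) (hn : 3 ≤ n) (Cu Cd R : Fin n → ℝ)
    (hCu : ∀ i, 0 < Cu i) (hCd : ∀ i, 0 < Cd i) (hR : ∀ i, 0 < R i)
    (hsus : Sustainable n Cu Cd R) :
    ∀ i : Fin n, ∑ k ∈ Finset.univ.erase i, ∑ j, algOutput n Cu R k j ≤ Cd i := by
  intro i
  refine le_trans (Finset.sum_le_sum fun k _ => ?_) (hsus.2.1 i)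
  exact outer_aux n hn R hR _ _ _ (fun k => by simpa using (hR k).le) k
end

section
/- Suppose R_i ≤ C_u(i) for all i with 1 ≤ i ≤ n. Then all sub-stream rates output by Algorithm 1 are nonnegative: r_{i,j} ≥ 0 for all i, j with 1 ≤ i, j ≤ n. -/
open Finset

theorem innerLoop_nonneg (n : ℕ) (hn : 3 ≤ n) (js : List (Fin n)) :
    ∀ (R' : ℝ) (U : Fin n → ℝ), 0 ≤ R' → (∀ j, 0 ≤ U j) →
      (∀ j, 0 ≤ (innerLoop n R' U js).1 j) ∧ (∀ j, 0 ≤ (innerLoop n R' U js).2 j) := by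
  have hc : (0 : ℝ) < (n : ℝ) - 2 := by
    have : (3 : ℝ) ≤ n := by exact_mod_cast hn
    linarith
  have upd : ∀ (f : Fin n → ℝ) (j : Fin n) (x : ℝ), (∀ k, 0 ≤ f k) → 0 ≤ x →
      ∀ k, 0 ≤ Function.update f j x k := by
    intro f j x hf hx k
    rw [Function.update_apply]
    split_ifs
    · exact hx
    · exact hf k
  induction js with
  | nil =>
    intro R' U hR hU
    exact ⟨fun _ => le_refl _, hU⟩
  | cons j js ih =>
    intro R' U hR hU
    rw [innerLoop]
    dsimp only
    obtain ⟨x, hx⟩ : ∃ x : ℝ,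
      x = (if (n - 2 : ℝ) * R' > U j then U j / (n - 2 : ℝ) else R') := ⟨_, rfl⟩
    rw [← hx]
    have h : 0 ≤ x ∧ x ≤ R' ∧ 0 ≤ U j - ((n : ℝ) - 2) * x := by
      split_ifs at hx with hlt
      · subst hx
        refine ⟨div_nonneg (hU j) hc.le, ?_, ?_⟩
        · rw [div_le_iff₀ hc]
          linarith
        · rw [mul_div_cancel₀ _ hc.ne']
          simp
      · subst hx
        exact ⟨hR, le_refl _, by linarith⟩
    obtain ⟨h0, h1, h2⟩ := h
    have hU' := upd U j _ hU h2
    split_ifs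
    · exact ⟨upd _ j x (fun _ => le_refl _) h0, hU'⟩
    · have := ih (R' - x) _ (by linarith) hU'
      exact ⟨upd _ j x this.1 h0, this.2⟩

theorem outerLoop_nonneg (n : ℕ) (hn : 3 ≤ n) (R : Fin n → ℝ) (hR : ∀ i, 0 < R i)
    (is : List (Fin n)) :
    ∀ (r : Fin n → Fin n → ℝ) (U : Fin n → ℝ), (∀ i j, 0 ≤ r i j) → (∀ j, 0 ≤ U j) →
      ∀ i j, 0 ≤ (outerLoop n R r U is).1 i j := by
  induction is with
  | nil =>
    intro r U hr hU
    exact hr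
  | cons i is ih =>
    intro r U hr hU
    rw [outerLoop]
    have := innerLoop_nonneg n hn (List.finRange n) (R i) U (hR i).le hU
    refine ih _ _ ?_ this.2
    intro k l
    rw [Function.update_apply]
    split_ifs
    · exact this.1 l
    · exact hr k l

/-- If `R i ≤ Cu i` for all `i`, then every sub-stream rate
output by Algorithm 1 is nonnegative. -/
theorem rates_nonneg (n : ℕ) (hn : 3 ≤ n) (Cu R : Fin n → ℝ)
    (hCu : ∀ i, 0 < Cu i) (hR : ∀ i, 0 < R i)
    (hRCu : ∀ i, R i ≤ Cu i) :
    ∀ i j : Fin n, 0 ≤ algOutput n Cu R i j := by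
  intro i j
  exact outerLoop_nonneg n hn R hR _ _ _ (fun _ _ => le_refl _)
    (fun j => sub_nonneg.2 (hRCu j)) i j
end
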